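/- For every countable ordinal β there exists a separable LMP 𝕊 (with countable label set) such that Z(𝕊) ≥ β; that is, the supremum of the Zhou ordinals of separable LMPs is at least ω₁. -/

import Mathlib

open MeasureTheory

/-- A labelled Markov process over the measurable space `S` with label set `L`:
each `τ a` is a Markov kernel, i.e. `τ a s` is a subprobability measure for each state `s`,
and `s ↦ τ a s E` is measurable for each measurable `E`. -/
structure LMP (S : Type*) (L : Type*) [MeasurableSpace S] where
  τ : L → S → Measure S
  prob_le_one : ∀ (a : L) (s : S), τ a s Set.univ ≤ 1
  measurable_eval : ∀ (a : L) (E : Set S), MeasurableSet E → Measurable fun s => τ a s E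

namespace LMP

variable {S L : Type*} [MeasurableSpace S]

/-- `A` is `R`-closed: anything related to a point of `A` lies in `A`. -/
def RClosed (R : Set (S × S)) (A : Set S) : Prop :=
  ∀ ⦃x⦄, x ∈ A → ∀ ⦃s⦄, (x, s) ∈ R → s ∈ A

/-- `Σ(R)`: the family of measurable `R`-closed sets. -/
def sigmaCl (R : Set (S × S)) : Set (Set S) :=
  {A | MeasurableSet A ∧ RClosed R A}

/-- `R(Λ)`: the relation identifying states belonging to exactly the same members of `Λ`. -/
def rel (Λ : Set (Set S)) : Set (S × S) :=
  {p | ∀ A ∈ Λ, p.1 ∈ A ↔ p.2 ∈ A}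

/-- `R^T(Λ)`: states assigning the same probabilities to every member of `Λ`, for all labels. -/
def relT (M : LMP S L) (Λ : Set (Set S)) : Set (S × S) :=
  {p | ∀ (a : L), ∀ E ∈ Λ, M.τ a p.1 E = M.τ a p.2 E}

/-- The operator `𝒪`. -/
def Oop (M : LMP S L) (R : Set (S × S)) : Set (S × S) :=
  M.relT (sigmaCl R)

/-- The operator `𝒢`. -/
def Gop (M : LMP S L) (Λ : Set (Set S)) : Set (Set S) :=
  sigmaCl (M.relT Λ)

/-- The members of the σ-algebra generated by a family of sets. -/
def sigmaGen (U : Set (Set S)) : Set (Set S) :=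
  {A | MeasurableSet[MeasurableSpace.generateFrom U] A}

/-- Transfinite iterates of `𝒪`. -/
noncomputable def Oiter (M : LMP S L) (R : Set (S × S)) (α : Ordinal) : Set (S × S) :=
  Ordinal.limitRecOn α R (fun _ prev => M.Oop prev)
    (fun o _ ih => ⋂ (o' : Ordinal) (h : o' < o), ih o' h)

/-- Transfinite iterates of `𝒢`. -/
noncomputable def Giter (M : LMP S L) (Λ : Set (Set S)) (α : Ordinal) : Set (Set S) :=
  Ordinal.limitRecOn α Λ (fun _ prev => M.Gop prev)
    (fun o _ ih => sigmaGen (⋃ (o' : Ordinal) (h : o' < o), ih o' h))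

/-- `Λ` is a sub-σ-algebra of the ambient σ-algebra. -/
structure IsSubSigmaAlgebra (Λ : Set (Set S)) : Prop where
  subset_meas : ∀ A ∈ Λ, MeasurableSet A
  empty_mem : (∅ : Set S) ∈ Λ
  compl_mem : ∀ A ∈ Λ, Aᶜ ∈ Λ
  iUnion_mem : ∀ f : ℕ → Set S, (∀ n, f n ∈ Λ) → (⋃ n, f n) ∈ Λ

/-- A family `Λ` is stable w.r.t. the process. -/
def Stable (M : LMP S L) (Λ : Set (Set S)) : Prop :=
  ∀ A ∈ Λ, ∀ q : ℚ, 0 ≤ q → q ≤ 1 → ∀ a : L,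
    {s : S | ENNReal.ofReal (q : ℝ) < M.τ a s A} ∈ Λ

/-- A state bisimulation: a symmetric relation such that related states agree on
all measurable `R`-closed sets. -/
def IsStateBisim (M : LMP S L) (R : Set (S × S)) : Prop :=
  (∀ p ∈ R, (p.2, p.1) ∈ R) ∧
    ∀ p ∈ R, ∀ (a : L), ∀ C ∈ sigmaCl R, M.τ a p.1 C = M.τ a p.2 C

/-- State bisimilarity. -/
def stateBisim (M : LMP S L) : Set (S × S) :=
  {p | ∃ R, M.IsStateBisim R ∧ p ∈ R}

/-- Event bisimilarity: related by `R(Λ)` for some stable sub-σ-algebra `Λ`. -/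
def eventBisim (M : LMP S L) : Set (S × S) :=
  {p | ∃ Λ : Set (Set S), IsSubSigmaAlgebra Λ ∧ M.Stable Λ ∧ p ∈ rel Λ}

/-- Formulas of the modal logic `𝓛`. -/
inductive LForm (L : Type*) : Type _
  | top : LForm L
  | and : LForm L → LForm L → LForm L
  | dia : L → {q : ℚ // 0 ≤ q ∧ q < 1} → LForm L → LForm L

/-- Semantics of the logic `𝓛`. -/
def sem (M : LMP S L) : LForm L → Set S
  | LForm.top => Set.univ
  | LForm.and φ ψ => M.sem φ ∩ M.sem ψ
  | LForm.dia a q φ => {s | ENNReal.ofReal ((q : ℚ) : ℝ) < M.τ a s (M.sem φ)}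

/-- `σ(⟦𝓛⟧)`: the σ-algebra generated by the sets definable in the logic. -/
def sigmaLogic (M : LMP S L) : Set (Set S) :=
  sigmaGen (Set.range M.sem)

end LMP

/-- A measurable space is separable if its σ-algebra is countably generated and
separates points. -/
def SeparableMeasurableSpace (S : Type*) [m : MeasurableSpace S] : Prop :=
  (∃ U : Set (Set S), U.Countable ∧ MeasurableSpace.generateFrom U = m) ∧
    ∀ s t : S, s ≠ t → ∃ A : Set S, MeasurableSet A ∧ s ∈ A ∧ t ∉ A

namespace LMP

/-- `ζ` is the Zhou ordinal of `M`: the least ordinal `α` such that `𝒪^α(∼e) = ∼s`. -/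
def IsZhou {S L : Type*} [MeasurableSpace S] (M : LMP S L) (ζ : Ordinal) : Prop :=
  M.Oiter M.eventBisim ζ = M.stateBisim ∧
    ∀ β < ζ, M.Oiter M.eventBisim β ≠ M.stateBisim

end LMP

/-- A labelled Markov process bundled together with its state space and a countable
label set. -/
structure PackedLMP : Type 1 where
  S : Type
  mS : MeasurableSpace S
  L : Type
  cL : Countable L
  M : @LMP S L mS

namespace PackedLMP

/-- The bundled LMP is separable. -/
def Separable (P : PackedLMP) : Prop :=
  letI := P.mS; SeparableMeasurableSpace P.S

/-- `ζ` is the Zhou ordinal of the bundled LMP. -/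
def IsZhou (P : PackedLMP) (ζ : Ordinal.{0}) : Prop :=
  letI := P.mS; LMP.IsZhou P.M ζ

end PackedLMP

/-- The set of Zhou ordinals of separable LMPs. -/
def zhouOrdinals : Set Ordinal.{0} :=
  {ζ | ∃ P : PackedLMP, P.Separable ∧ P.IsZhou ζ}

/-!
Let parity be a linear functional on `0`-`1` sequences that extends the sum modulo `2` of finitely
supported ones. Flipping one coordinate preserves Haar measure and reverses parity, so the Haar
measures on the sequences of parity `0` and of parity `1` agree on every event that ignores some
coordinate, and hence on every Haar measurable event. Only an event such as parity itself, adjoined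
to the σ-algebra by hand, tells them apart.

The process has countably many components, one for each ordinal below some countable ordinal. In
the component of rank `α`, a bit `b` draws a sequence of parity `b`, and a sequence shows its
coordinates of rank `≥ α` directly, but a coordinate of rank `γ < α` only by moving to the
corresponding bit in the component of rank `γ`. The event of parity `b` becomes closed only after
the two bits of every component of lower rank are separated. So event bisimilarity, which is coarse
enough to ignore parity, separates the two bits of no component, and the first `α` iterations of
`𝒪` do not separate the two bits at rank `α`. State bisimilarity does, by induction on the rank.
-/

namespace LMP

section Bisimilarity

universe u v

variable {S : Type u} {L : Type v} [MeasurableSpace S] (M : LMP S L)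

theorem sigmaCl_anti {R R' : Set (S × S)} (h : R ⊆ R') : sigmaCl R' ⊆ sigmaCl R :=
  fun _ hA => ⟨hA.1, fun _ hx _ hs => hA.2 hx (h hs)⟩

theorem univ_mem_sigmaCl (R : Set (S × S)) : Set.univ ∈ sigmaCl R :=
  ⟨MeasurableSet.univ, fun _ _ _ _ => trivial⟩

theorem isSubSigmaAlgebra_measurableSet : IsSubSigmaAlgebra {A : Set S | MeasurableSet A} where
  subset_meas _ hA := hA
  empty_mem := MeasurableSet.empty
  compl_mem _ hA := hA.compl
  iUnion_mem _ hf := .iUnion hf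

theorem stable_measurableSet : M.Stable {A : Set S | MeasurableSet A} :=
  fun A hA _ _ _ a => measurableSet_lt measurable_const (M.measurable_eval a A hA)

theorem isSubSigmaAlgebra_sigmaCl {R : Set (S × S)} (hsymm : ∀ p ∈ R, (p.2, p.1) ∈ R) :
    IsSubSigmaAlgebra (sigmaCl R) where
  subset_meas _ hA := hA.1
  empty_mem := ⟨MeasurableSet.empty, fun _ hx => hx.elim⟩
  compl_mem _ hA := ⟨hA.1.compl, fun _ hx _ hs hsA => hx (hA.2 hsA (hsymm _ hs))⟩
  iUnion_mem f hf := by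
    refine ⟨.iUnion fun n => (hf n).1, fun x hx s hs => ?_⟩
    obtain ⟨n, hn⟩ := Set.mem_iUnion.1 hx
    exact Set.mem_iUnion.2 ⟨n, (hf n).2 hn hs⟩

theorem IsSubSigmaAlgebra.inter {Λ Λ' : Set (Set S)} (hΛ : IsSubSigmaAlgebra Λ)
    (hΛ' : IsSubSigmaAlgebra Λ') : IsSubSigmaAlgebra (Λ ∩ Λ') where
  subset_meas A hA := hΛ.subset_meas A hA.1
  empty_mem := ⟨hΛ.empty_mem, hΛ'.empty_mem⟩
  compl_mem A hA := ⟨hΛ.compl_mem A hA.1, hΛ'.compl_mem A hA.2⟩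
  iUnion_mem f hf := ⟨hΛ.iUnion_mem f fun n => (hf n).1, hΛ'.iUnion_mem f fun n => (hf n).2⟩

-- The closed sets in `Λ` form a stable σ-algebra, even where `sigmaCl R` itself is not stable.
theorem subset_eventBisim {Λ : Set (Set S)} (hΛ : IsSubSigmaAlgebra Λ) (hstable : M.Stable Λ)
    {R : Set (S × S)} (hsymm : ∀ p ∈ R, (p.2, p.1) ∈ R) (hR : R ⊆ M.relT (sigmaCl R ∩ Λ)) :
    R ⊆ M.eventBisim := by
  refine fun p hp => ⟨_, (isSubSigmaAlgebra_sigmaCl hsymm).inter hΛ, ?_, ?_⟩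
  · refine fun A hA q h0 h1 a => ⟨⟨?_, fun x hx s hs => ?_⟩, hstable A hA.2 q h0 h1 a⟩
    · exact M.stable_measurableSet A hA.1.1 q h0 h1 a
    · exact lt_of_lt_of_eq hx (hR hs a A hA)
  · exact fun A hA => ⟨fun h => hA.1.2 h hp, fun h => hA.1.2 h (hsymm p hp)⟩

theorem relT_subset_eventBisim {Λ : Set (Set S)} (hΛ : IsSubSigmaAlgebra Λ)
    (hstable : M.Stable Λ) : M.relT Λ ⊆ M.eventBisim :=
  M.subset_eventBisim hΛ hstable (fun _ hp a E hE => (hp a E hE).symm)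
    fun _ hp a E hE => hp a E hE.2

/-- The intersection of all stable sub-σ-algebras. It is itself one, so it induces event
bisimilarity. -/
def leastStable : Set (Set S) :=
  {A | ∀ Λ : Set (Set S), IsSubSigmaAlgebra Λ → M.Stable Λ → A ∈ Λ}

theorem isSubSigmaAlgebra_leastStable : IsSubSigmaAlgebra M.leastStable where
  subset_meas _ hA := hA _ isSubSigmaAlgebra_measurableSet M.stable_measurableSet
  empty_mem _ hΛ _ := hΛ.empty_mem
  compl_mem A hA Λ hΛ hst := hΛ.compl_mem A (hA Λ hΛ hst)
  iUnion_mem f hf Λ hΛ hst := hΛ.iUnion_mem f fun n => hf n Λ hΛ hst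

theorem stable_leastStable : M.Stable M.leastStable :=
  fun A hA q h0 h1 a Λ hΛ hst => hst A (hA Λ hΛ hst) q h0 h1 a

theorem leastStable_subset_sigmaCl_eventBisim : M.leastStable ⊆ sigmaCl M.eventBisim :=
  fun A hA => ⟨M.isSubSigmaAlgebra_leastStable.subset_meas A hA,
    fun _ hx _ ⟨Λ, hΛ, hst, h⟩ => (h A (hA Λ hΛ hst)).1 hx⟩

theorem Oop_eventBisim_subset : M.Oop M.eventBisim ⊆ M.eventBisim :=
  fun _ h => M.relT_subset_eventBisim M.isSubSigmaAlgebra_leastStable M.stable_leastStable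
    fun a E hE => h a E (M.leastStable_subset_sigmaCl_eventBisim hE)

/-- The operator `𝒪` as a monotone map on the lattice of relations. -/
def OopHom : Set (S × S) →o Set (S × S) where
  toFun := M.Oop
  monotone' _ _ h _ hp a E hE := hp a E (sigmaCl_anti h hE)

theorem stateBisim_eq_gfp : M.stateBisim = M.OopHom.gfp := by
  apply subset_antisymm
  · rintro p ⟨R, hR, hp⟩
    exact M.OopHom.le_gfp (a := R) (fun q hq a E hE => hR.2 q hq a E hE) hp
  · intro p hp
    have hfix : M.Oop M.OopHom.gfp = M.OopHom.gfp := M.OopHom.map_gfp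
    refine ⟨M.OopHom.gfp, ⟨fun q hq => ?_, fun q hq => ?_⟩, hp⟩
    · rw [← hfix] at hq ⊢
      exact fun a E hE => (hq a E hE).symm
    · rw [← hfix] at hq
      exact hq

theorem Oop_stateBisim : M.Oop M.stateBisim = M.stateBisim := by
  rw [stateBisim_eq_gfp]
  exact M.OopHom.map_gfp

theorem τ_eq_of_mem_stateBisim {s t : S} (h : (s, t) ∈ M.stateBisim) {E : Set S}
    (hE : E ∈ sigmaCl M.stateBisim) (a : L) : M.τ a s E = M.τ a t E := by
  rw [← Oop_stateBisim] at h
  exact h a E hE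

theorem stateBisim_subset_eventBisim : M.stateBisim ⊆ M.eventBisim :=
  M.subset_eventBisim isSubSigmaAlgebra_measurableSet M.stable_measurableSet
    (fun _ ⟨R, hR, hp⟩ => ⟨R, hR, hR.1 _ hp⟩) fun _ hp a _ hE => M.τ_eq_of_mem_stateBisim hp hE.1 a

theorem Oiter_zero (R : Set (S × S)) : M.Oiter R 0 = R :=
  Ordinal.limitRecOn_zero ..

theorem Oiter_add_one (R : Set (S × S)) (α : Ordinal) :
    M.Oiter R (α + 1) = M.Oop (M.Oiter R α) :=
  Ordinal.limitRecOn_add_one ..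

theorem Oiter_of_isSuccLimit (R : Set (S × S)) {α : Ordinal} (hα : Order.IsSuccLimit α) :
    M.Oiter R α = ⋂ γ < α, M.Oiter R γ :=
  Ordinal.limitRecOn_limit _ _ _ _ hα

theorem Oiter_eq_gfpApprox {R : Set (S × S)} (hR : M.Oop R ⊆ R) (α : Ordinal.{u}) :
    M.Oiter R α = OrdinalApprox.gfpApprox M.OopHom R α := by
  induction α using Ordinal.limitRecOn with
  | zero => rw [Oiter_zero, OrdinalApprox.gfpApprox_zero]
  | add_one α ih =>
    rw [Oiter_add_one, ih, OrdinalApprox.gfpApprox_add_one M.OopHom hR]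
    rfl
  | limit α hα ih =>
    rw [M.Oiter_of_isSuccLimit R hα, OrdinalApprox.gfpApprox_of_isSuccLimit M.OopHom hα,
      Set.iInf_eq_iInter, Set.iInter_subtype]
    exact Set.iInter₂_congr ih

theorem Oiter_eventBisim_ord_eq_stateBisim :
    M.Oiter M.eventBisim (Order.succ (Cardinal.mk (Set (S × S)))).ord = M.stateBisim := by
  rw [M.Oiter_eq_gfpApprox M.Oop_eventBisim_subset]
  apply le_antisymm
  · rw [stateBisim_eq_gfp]
    exact M.OopHom.le_gfp
      (OrdinalApprox.gfpApprox_ord_mem_fixedPoint M.OopHom M.Oop_eventBisim_subset).ge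
  · exact OrdinalApprox.le_gfpApprox_of_mem_fixedPoints M.OopHom M.Oop_stateBisim
      M.stateBisim_subset_eventBisim _

theorem exists_isZhou : ∃ ζ : Ordinal.{u}, M.IsZhou ζ := by
  let fixed : Set Ordinal.{u} := {α | M.Oiter M.eventBisim α = M.stateBisim}
  have hfixed : fixed.Nonempty := ⟨_, M.Oiter_eventBisim_ord_eq_stateBisim⟩
  exact ⟨sInf fixed, csInf_mem hfixed, fun α hα hfix =>
    notMem_of_lt_csInf' hα (show α ∈ fixed from hfix)⟩

variable {M}

theorem IsZhou.le_ord {ζ : Ordinal.{u}} (hζ : M.IsZhou ζ) :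
    ζ ≤ (Order.succ (Cardinal.mk (Set (S × S)))).ord :=
  not_lt.1 fun hlt => hζ.2 _ hlt M.Oiter_eventBisim_ord_eq_stateBisim

end Bisimilarity

end LMP

section Separable

open MeasurableSpace

theorem separableMeasurableSpace_iff {S : Type*} [m : MeasurableSpace S] :
    SeparableMeasurableSpace S ↔ CountablyGenerated S ∧ SeparatesPoints S := by
  refine and_congr ⟨fun ⟨U, hU, h⟩ => ⟨U, hU, h.symm⟩, fun ⟨U, hU, h⟩ => ⟨U, hU, h.symm⟩⟩
    ⟨fun h => ⟨fun s t hst => ?_⟩, fun h s t hst => exists_measurableSet_of_ne hst⟩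
  by_contra hne
  obtain ⟨A, hA, hs, ht⟩ := h s t hne
  exact ht (hst A hA hs)

theorem SeparableMeasurableSpace.mk_le_continuum {S : Type*} [MeasurableSpace S]
    (hS : SeparableMeasurableSpace S) : Cardinal.mk S ≤ Cardinal.continuum := by
  obtain ⟨_, _⟩ := separableMeasurableSpace_iff.1 hS
  obtain ⟨f, -, hf⟩ := measurable_injection_nat_bool_of_countablySeparated S
  simpa using Cardinal.mk_le_of_injective (Function.Injective.comp (Equiv.ulift.symm.injective) hf)

theorem bddAbove_zhouOrdinals : BddAbove zhouOrdinals := by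
  refine ⟨(Order.succ ((2 : Cardinal.{0}) ^ Cardinal.continuum.{0})).ord, ?_⟩
  rintro ζ ⟨P, hsep, hζ⟩
  let _ := P.mS
  have hS : Cardinal.mk P.S ≤ Cardinal.continuum :=
    SeparableMeasurableSpace.mk_le_continuum hsep
  have hSS : Cardinal.mk (P.S × P.S) ≤ Cardinal.continuum := by
    rw [← Cardinal.mul_def, ← Cardinal.continuum_mul_self]
    exact mul_le_mul' hS hS
  refine (LMP.IsZhou.le_ord hζ).trans (Cardinal.ord_le_ord.2 (Order.succ_le_succ ?_))
  rw [Cardinal.mk_set]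
  exact Cardinal.power_le_power_left two_ne_zero hSS

instance {α β : Type*} [MeasurableSpace α] [MeasurableSpace β] [MeasurableSingletonClass α]
    [MeasurableSingletonClass β] : MeasurableSingletonClass (α ⊕ β) where
  measurableSet_singleton
    | .inl x => by simpa using (measurableSet_singleton x).inl_image (β := β)
    | .inr y => by simpa using (measurableSet_singleton y).inr_image (α := α)

theorem measurableSet_image_of_generateFrom {α γ : Type*} {_ : MeasurableSpace γ} {U : Set (Set α)}
    {f : α → γ} (hf : Function.Injective f) (hrange : MeasurableSet (Set.range f))
    (hU : ∀ A ∈ U, MeasurableSet (f '' A)) (A : Set α) (hA : MeasurableSet[generateFrom U] A) :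
    MeasurableSet (f '' A) := by
  induction A, hA using generateFrom_induction with
  | hC A hA _ => exact hU A hA
  | empty => simp
  | compl A _ ih =>
    rw [Set.image_compl_eq_range_sdiff_image hf]
    exact hrange.diff ih
  | iUnion A _ ih =>
    rw [Set.image_iUnion]
    exact .iUnion ih

instance {α β : Type*} [mα : MeasurableSpace α] [mβ : MeasurableSpace β] [CountablyGenerated α]
    [CountablyGenerated β] : CountablyGenerated (α ⊕ β) := by
  obtain ⟨U, hU, hmα⟩ := ‹CountablyGenerated α›
  obtain ⟨V, hV, hmβ⟩ := ‹CountablyGenerated β›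
  let generators : Set (Set (α ⊕ β)) :=
    {Set.range Sum.inl, Set.range Sum.inr} ∪ (Set.image Sum.inl '' U ∪ Set.image Sum.inr '' V)
  have hinl : ∀ A : Set α, MeasurableSet A →
      MeasurableSet[generateFrom generators] (Sum.inl '' A) := by
    rw [hmα]
    exact measurableSet_image_of_generateFrom Sum.inl_injective
      (measurableSet_generateFrom (by simp [generators]))
      fun A hA => measurableSet_generateFrom (.inr (.inl ⟨A, hA, rfl⟩))
  have hinr : ∀ B : Set β, MeasurableSet B →
      MeasurableSet[generateFrom generators] (Sum.inr '' B) := by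
    rw [hmβ]
    exact measurableSet_image_of_generateFrom Sum.inr_injective
      (measurableSet_generateFrom (by simp [generators]))
      fun B hB => measurableSet_generateFrom (.inr (.inr ⟨B, hB, rfl⟩))
  refine ⟨generators, ((Set.toFinite _).countable).union ((hU.image _).union (hV.image _)),
    le_antisymm (fun A hA => ?_) (generateFrom_le ?_)⟩
  · rw [← Set.image_preimage_inl_union_image_preimage_inr A]
    exact (hinl _ (measurable_inl hA)).union (hinr _ (measurable_inr hA))
  · rintro _ ((rfl | rfl) | ⟨A, hA, rfl⟩ | ⟨B, hB, rfl⟩)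
    · exact measurableSet_range_inl
    · exact measurableSet_range_inr
    · exact .inl_image (hmα ▸ measurableSet_generateFrom hA)
    · exact .inr_image (hmβ ▸ measurableSet_generateFrom hB)

end Separable

section Parity

variable {ι : Type*}

theorem exists_linearMap_single_eq (K ι : Type*) [Field K] :
    ∃ φ : (ι → K) →ₗ[K] K, ∀ (i : ι) (c : K), φ (Finsupp.single i c) = c := by
  obtain ⟨g, hg⟩ := (Finsupp.lcoeFun : (ι →₀ K) →ₗ[K] ι → K).exists_leftInverse_of_injective
    (LinearMap.ker_eq_bot.2 DFunLike.coe_injective)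
  refine ⟨Finsupp.linearCombination K (fun _ => 1) ∘ₗ g, fun i c => ?_⟩
  have hgi : g (Finsupp.single i c) = Finsupp.single i c :=
    LinearMap.congr_fun hg (Finsupp.single i c)
  simp [hgi]

/-- A linear extension, to all `0`-`1` sequences, of the sum modulo `2` of the coordinates of a
finitely supported one. For infinite `ι` it is not Haar measurable. -/
noncomputable def parity (ι : Type*) : (ι → ZMod 2) →ₗ[ZMod 2] ZMod 2 :=
  (exists_linearMap_single_eq (ZMod 2) ι).choose

theorem parity_single [DecidableEq ι] (i : ι) (c : ZMod 2) : parity ι (Pi.single i c) = c := by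
  rw [← Finsupp.single_eq_pi_single]
  exact (exists_linearMap_single_eq (ZMod 2) ι).choose_spec i c

/-- The Haar probability measure on `0`-`1` sequences. -/
noncomputable def coinMeasure (ι : Type*) [Countable ι] : Measure (ι → ZMod 2) :=
  Measure.addHaarMeasure ⊤

instance [Countable ι] : (coinMeasure ι).IsAddHaarMeasure :=
  inferInstanceAs (Measure.addHaarMeasure ⊤).IsAddHaarMeasure

instance [Countable ι] : IsProbabilityMeasure (coinMeasure ι) :=
  ⟨Measure.addHaarMeasure_self (K₀ := ⊤)⟩

theorem coinMeasure_inter_parity_eq [Countable ι] {A : Set (ι → ZMod 2)} {i : ι}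
    (hA : DependsOn (· ∈ A) {i}ᶜ) (b c : ZMod 2) :
    coinMeasure ι (A ∩ parity ι ⁻¹' {b}) = coinMeasure ι (A ∩ parity ι ⁻¹' {c}) := by
  classical
  have hflip : (A ∩ parity ι ⁻¹' {b}) =
      (fun x => Pi.single i (c - b) + x) ⁻¹' (A ∩ parity ι ⁻¹' {c}) := by
    ext x
    have hxA : x ∈ A ↔ Pi.single i (c - b) + x ∈ A :=
      (hA fun j hj => by simp [Pi.single_eq_of_ne hj]).to_iff
    have hxb : parity ι x = b ↔ parity ι (Pi.single i (c - b) + x) = c := by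
      rw [map_add, parity_single, sub_add_eq_add_sub, sub_eq_iff_eq_add, add_right_inj]
    exact and_congr hxA hxb
  rw [hflip, measure_preimage_add]

theorem coinMeasure_parity_ne_zero [Countable ι] [Nonempty ι] (b : ZMod 2) :
    coinMeasure ι (parity ι ⁻¹' {b}) ≠ 0 := by
  intro hb
  have hzero : ∀ c, coinMeasure ι (parity ι ⁻¹' {c}) = 0 := fun c => by
    have hbc := coinMeasure_inter_parity_eq (A := Set.univ) (i := Classical.arbitrary ι)
      (fun _ _ _ => rfl) b c
    rwa [Set.univ_inter, Set.univ_inter, hb, eq_comm] at hbc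
  have huniv : coinMeasure ι (⋃ c, parity ι ⁻¹' {c}) = 0 := measure_iUnion_null hzero
  rw [← Set.preimage_iUnion, Set.iUnion_of_singleton, Set.preimage_univ, measure_univ] at huniv
  exact one_ne_zero huniv

theorem comap_le_caratheodory_comap {α β : Type*} [mβ : MeasurableSpace β] (f : α → β)
    (μ : Measure β) : mβ.comap f ≤ (OuterMeasure.comap f μ.toOuterMeasure).caratheodory := by
  rintro _ ⟨B, hB, rfl⟩ T
  simp only [OuterMeasure.comap_apply, Measure.coe_toOuterMeasure]
  rw [Set.image_inter_preimage, Set.image_sdiff_preimage, measure_inter_add_sdiff _ hB]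

/-- The trace along `f` of a measure on the codomain. Unlike `MeasureTheory.Measure.comap` it is
the outer measure of the image, also when the range of `f` is not measurable. -/
noncomputable def traceMeasure {α β : Type*} [mβ : MeasurableSpace β] (f : α → β)
    (μ : Measure β) : Measure[mβ.comap f] α :=
  @OuterMeasure.toMeasure _ (mβ.comap f) (OuterMeasure.comap f μ.toOuterMeasure)
    (comap_le_caratheodory_comap f μ)

theorem traceMeasure_apply {α β : Type*} [mβ : MeasurableSpace β] (f : α → β) (μ : Measure β)
    {A : Set α} (hA : MeasurableSet[mβ.comap f] A) : traceMeasure f μ A = μ (f '' A) :=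
  @toMeasure_apply _ (mβ.comap f) _ (comap_le_caratheodory_comap f μ) _ hA

/-- Sequences of bits, as a type of their own so as to carry the smallest σ-algebra that makes the
parity measurable besides the coordinates. -/
@[ext]
structure ParityCube (ι : Type*) where
  bits : ι → ZMod 2

namespace ParityCube

/-- The embedding of the cube as the graph of `parity`, which induces its σ-algebra. -/
noncomputable def graph (x : ParityCube ι) : ZMod 2 × (ι → ZMod 2) := (parity ι x.bits, x.bits)

noncomputable instance : MeasurableSpace (ParityCube ι) :=
  MeasurableSpace.comap graph inferInstance

theorem measurable_bits : Measurable (bits : ParityCube ι → ι → ZMod 2) :=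
  measurable_snd.comp (comap_measurable graph)

theorem measurable_parity : Measurable fun x : ParityCube ι => parity ι x.bits :=
  measurable_fst.comp (comap_measurable graph)

variable [Countable ι]

instance : MeasurableSpace.CountablyGenerated (ParityCube ι) :=
  .comap graph

instance : MeasurableSingletonClass (ParityCube ι) where
  measurableSet_singleton x := by
    convert measurable_bits (measurableSet_singleton x.bits)
    ext y
    exact ParityCube.ext_iff

/-- The trace on the cube of the Haar measure on the sequences of parity `b`. -/
noncomputable def parityMeasure (b : ZMod 2) : Measure (ParityCube ι) :=
  traceMeasure graph ((coinMeasure ι).map (Prod.mk b))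

theorem parityMeasure_apply (b : ZMod 2) {A : Set (ParityCube ι)} (hA : MeasurableSet A) :
    parityMeasure b A = coinMeasure ι (mk ⁻¹' A ∩ parity ι ⁻¹' {b}) := by
  rw [parityMeasure, traceMeasure_apply _ _ hA, (measurableEmbedding_prodMk_left b).map_apply]
  congr 1
  ext x
  constructor
  · rintro ⟨y, hyA, hy⟩
    obtain ⟨rfl, rfl⟩ := Prod.mk.inj hy
    exact ⟨hyA, rfl⟩
  · rintro ⟨hxA, rfl⟩
    exact ⟨mk x, hxA, rfl⟩

theorem parityMeasure_univ_le_one (b : ZMod 2) :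
    parityMeasure b (Set.univ : Set (ParityCube ι)) ≤ 1 := by
  rw [parityMeasure_apply b .univ]
  exact prob_le_one

instance (b : ZMod 2) : IsFiniteMeasure (parityMeasure b : Measure (ParityCube ι)) :=
  ⟨(parityMeasure_univ_le_one b).trans_lt ENNReal.one_lt_top⟩

theorem parityMeasure_eq_of_dependsOn {A : Set (ParityCube ι)} (hA : MeasurableSet A) {i : ι}
    (hAi : DependsOn (fun x => mk x ∈ A) {i}ᶜ) (b c : ZMod 2) :
    parityMeasure b A = parityMeasure c A := by
  rw [parityMeasure_apply b hA, parityMeasure_apply c hA]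
  exact coinMeasure_inter_parity_eq hAi b c

theorem parityMeasure_map_bits_eq [Infinite ι] (b c : ZMod 2) :
    (parityMeasure b).map (bits (ι := ι)) = (parityMeasure c).map bits := by
  have hcylinder : ∀ B ∈ measurableCylinders fun _ : ι => ZMod 2,
      (parityMeasure b).map bits B = (parityMeasure c).map bits B := by
    intro B hB
    rw [Measure.map_apply measurable_bits (.of_mem_measurableCylinders hB),
      Measure.map_apply measurable_bits (.of_mem_measurableCylinders hB)]
    obtain ⟨J, T, -, rfl⟩ := (mem_measurableCylinders B).1 hB
    obtain ⟨i, hi⟩ := Infinite.exists_notMem_finset J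
    refine parityMeasure_eq_of_dependsOn
      (measurable_bits (.of_mem_measurableCylinders hB)) (i := i) (fun x y hxy => ?_) b c
    have hJ : J.restrict x = J.restrict y :=
      funext fun j => hxy j (ne_of_mem_of_not_mem j.2 hi)
    simp only [Set.mem_preimage, mem_cylinder, hJ]
  exact ext_of_generate_finite _ generateFrom_measurableCylinders.symm
    isPiSystem_measurableCylinders hcylinder (hcylinder _ (univ_mem_measurableCylinders _))

theorem parityMeasure_eq_of_measurableSet_preimage_mk [Infinite ι] {A : Set (ParityCube ι)}
    (hA : MeasurableSet (mk ⁻¹' A)) (b c : ZMod 2) : parityMeasure b A = parityMeasure c A := by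
  have hAmap : ∀ d, parityMeasure d A = (parityMeasure d).map bits (mk ⁻¹' A) :=
    fun d => (Measure.map_apply measurable_bits hA).symm
  rw [hAmap, hAmap, parityMeasure_map_bits_eq b c]

theorem parityMeasure_parity_eq_zero_iff [Nonempty ι] {b c : ZMod 2} :
    parityMeasure b {x : ParityCube ι | parity ι x.bits = c} = 0 ↔ b ≠ c := by
  have hpre : mk ⁻¹' {x : ParityCube ι | parity ι x.bits = c} = parity ι ⁻¹' {c} := rfl
  rw [parityMeasure_apply b (measurableSet_eq_fun measurable_parity measurable_const), hpre,
    ← Set.preimage_inter]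
  refine ⟨?_, fun hbc => ?_⟩
  · rintro h rfl
    rw [Set.inter_self] at h
    exact coinMeasure_parity_ne_zero b h
  · rw [(Set.disjoint_singleton.2 hbc.symm).inter_eq, Set.preimage_empty, measure_empty]

end ParityCube

end Parity

/-- States of the process: at each component `k` there are the sequences of the cube and two bits.
The components also serve as the coordinates of the cube. -/
abbrev ParityState (K : Type*) : Type _ := K × (ParityCube K ⊕ ZMod 2)

namespace ParityState

open ParityCube

variable {K : Type*}

/-- The sequence `x` at component `k`. -/
abbrev seq (k : K) (x : ParityCube K) : ParityState K := (k, .inl x)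

/-- The bit `b` at component `k`. -/
abbrev bit (k : K) (b : ZMod 2) : ParityState K := (k, .inr b)

/-- The component of a state together with whether it is a sequence. -/
abbrev kind (s : ParityState K) : K × Bool := (s.1, s.2.isLeft)

/-- The states of the same kind that `α` rounds of refinement do not separate: sequences that agree
at the coordinates of rank less than `α` and at the directly visible ones, and bits at components
of rank at least `α`. -/
inductive Indist (r : K → Ordinal) (α : Ordinal) : ParityState K → ParityState K → Prop
  | seq {k : K} {x y : ParityCube K} (h : ∀ ℓ, r ℓ < α ∨ r k ≤ r ℓ → x.bits ℓ = y.bits ℓ) :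
    Indist r α (seq k x) (seq k y)
  | bit {k : K} {b c : ZMod 2} (h : r k < α → b = c) : Indist r α (bit k b) (bit k c)

/-- `Indist r α` as a set of pairs. -/
def indist (r : K → Ordinal) (α : Ordinal) : Set (ParityState K × ParityState K) :=
  {p | Indist r α p.1 p.2}

theorem indist_symm {r : K → Ordinal} {α : Ordinal} :
    ∀ p ∈ indist r α, (p.2, p.1) ∈ indist r α := by
  rintro ⟨_, _⟩ (h | h)
  · exact .seq fun ℓ hℓ => (h ℓ hℓ).symm
  · exact .bit fun hk => (h hk).symm

theorem indist_anti {r : K → Ordinal} {α γ : Ordinal} (hαγ : α ≤ γ) : indist r γ ⊆ indist r α := by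
  rintro ⟨_, _⟩ (h | h)
  · exact .seq fun ℓ hℓ => h ℓ (hℓ.imp_left hαγ.trans_lt')
  · exact .bit fun hk => h (hk.trans_le hαγ)

section Measurable

variable [MeasurableSpace K]

theorem measurable_seq (k : K) : Measurable (seq k) :=
  measurable_prodMk_left.comp measurable_inl

theorem measurableEmbedding_seq [MeasurableSingletonClass K] (k : K) :
    MeasurableEmbedding (seq k) :=
  (measurableEmbedding_prodMk_left k).comp
    ⟨Sum.inl_injective, measurable_inl, fun _ hA => hA.inl_image⟩

theorem measurable_of_seq [Countable K] [DiscreteMeasurableSpace K] {β : Type*}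
    [MeasurableSpace β] {f : ParityState K → β} (hf : ∀ k, Measurable fun x => f (seq k x)) :
    Measurable f :=
  measurable_from_prod_countable_right fun k =>
    measurable_fun_sum (hf k) (measurable_of_countable _)

/-- The measurable sets whose sequences form a Haar measurable set at each component. -/
def haarSections (K : Type*) [MeasurableSpace K] : Set (Set (ParityState K)) :=
  {E | MeasurableSet E ∧ ∀ k, MeasurableSet ((fun x : K → ZMod 2 => seq k ⟨x⟩) ⁻¹' E)}

theorem isSubSigmaAlgebra_haarSections : LMP.IsSubSigmaAlgebra (haarSections K) where
  subset_meas _ hE := hE.1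
  empty_mem := ⟨.empty, fun _ => .empty⟩
  compl_mem _ hE := ⟨hE.1.compl, fun k => (hE.2 k).compl⟩
  iUnion_mem _ hE := ⟨.iUnion fun n => (hE n).1, fun k => by
    rw [Set.preimage_iUnion]
    exact .iUnion fun n => (hE n).2 k⟩

variable (r : K → Ordinal)

/-- Reading the bit `b` at coordinate `ℓ` of a sequence at component `k`: for `ℓ` of lower rank
the process moves to the bit `b` of component `ℓ`, otherwise it shows `b` by its total mass. -/
noncomputable def readBit (k ℓ : K) (b : ZMod 2) : Measure (ParityState K) :=
  open Classical in
  if r ℓ < r k then .dirac (bit ℓ b) else if b = 0 then 0 else .dirac (bit ℓ 0)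

theorem readBit_univ_le_one (k ℓ : K) (b : ZMod 2) : readBit r k ℓ b Set.univ ≤ 1 := by
  unfold readBit
  split_ifs
  · exact prob_le_one
  · exact zero_le_one
  · exact prob_le_one

variable {r} in
theorem readBit_univ_eq_zero_iff {k ℓ : K} (hℓ : ¬r ℓ < r k) {b : ZMod 2} :
    readBit r k ℓ b Set.univ = 0 ↔ b = 0 := by
  rw [readBit, if_neg hℓ]
  split_ifs with hb <;> simp [hb]

variable [Countable K]

/-- The transition measures: the label `inl ℓ` reads coordinate `ℓ` of a sequence and draws a
sequence of parity `b` at a bit `b`; the label `inr q` tests whether the state has kind `q`. -/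
noncomputable def transition : K ⊕ K × Bool → ParityState K → Measure (ParityState K)
  | .inl ℓ, (k, .inl x) => readBit r k ℓ (x.bits ℓ)
  | .inl _, (k, .inr b) => (parityMeasure b).map (seq k)
  | .inr q, s => open Classical in if kind s = q then .dirac (bit s.1 0) else 0

theorem transition_univ_le_one (a : K ⊕ K × Bool) (s : ParityState K) :
    transition r a s Set.univ ≤ 1 := by
  match a, s with
  | .inl ℓ, (k, .inl x) => exact readBit_univ_le_one r k ℓ _
  | .inl _, (k, .inr b) =>
    rw [transition, Measure.map_apply (measurable_seq k) .univ]
    exact parityMeasure_univ_le_one b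
  | .inr q, s =>
    rw [transition]
    split_ifs
    · exact prob_le_one
    · exact zero_le_one

theorem measurable_transition_seq_mk (a : K ⊕ K × Bool) (k : K) (E : Set (ParityState K)) :
    Measurable fun x : K → ZMod 2 => transition r a (seq k ⟨x⟩) E := by
  rcases a with ℓ | q
  · exact (measurable_of_countable fun b => readBit r k ℓ b E).comp (measurable_pi_apply ℓ)
  · exact measurable_const (a := transition r (.inr q) (seq k ⟨0⟩) E)

theorem parityMeasure_preimage_seq_eq {r : K → Ordinal} {k ℓ : K} (hℓ : r ℓ < r k)
    {E : Set (ParityState K)} (hE : E ∈ LMP.sigmaCl (indist r (r ℓ))) (b c : ZMod 2) :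
    parityMeasure b (seq k ⁻¹' E) = parityMeasure c (seq k ⁻¹' E) := by
  refine parityMeasure_eq_of_dependsOn (measurable_seq k hE.1) (i := ℓ) (fun x y hxy => ?_) b c
  have hagree : ∀ j, r j < r ℓ ∨ r k ≤ r j → x j = y j := by
    rintro j hj
    refine hxy j ?_
    rintro rfl
    exact hj.elim (lt_irrefl _) hℓ.not_ge
  exact propext ⟨fun hx => hE.2 hx (.seq hagree),
    fun hy => hE.2 hy (.seq fun j hj => (hagree j hj).symm)⟩

variable [DiscreteMeasurableSpace K]

/-- The process on the parity states whose component `k` has rank `r k`. -/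
noncomputable def parityLMP : LMP (ParityState K) (K ⊕ K × Bool) where
  τ := transition r
  prob_le_one := transition_univ_le_one r
  measurable_eval a E _ := measurable_of_seq fun k =>
    (measurable_transition_seq_mk r a k E).comp measurable_bits

variable {r}

theorem τ_bit_eq {k : K} {b c : ZMod 2} {E : Set (ParityState K)} (hE : MeasurableSet E)
    (h : parityMeasure b (seq k ⁻¹' E) = parityMeasure c (seq k ⁻¹' E)) (a : K ⊕ K × Bool) :
    (parityLMP r).τ a (bit k b) E = (parityLMP r).τ a (bit k c) E := by
  rcases a with ℓ | q
  · change (parityMeasure b).map (seq k) E = (parityMeasure c).map (seq k) E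
    rwa [Measure.map_apply (measurable_seq k) hE, Measure.map_apply (measurable_seq k) hE]
  · rfl

theorem τ_seq_eq {α : Ordinal} {k : K} {x y : ParityCube K}
    (h : ∀ ℓ, r ℓ < α ∨ r k ≤ r ℓ → x.bits ℓ = y.bits ℓ) {E : Set (ParityState K)}
    (hE : E ∈ LMP.sigmaCl (indist r α)) (a : K ⊕ K × Bool) :
    (parityLMP r).τ a (seq k x) E = (parityLMP r).τ a (seq k y) E := by
  rcases a with ℓ | q
  · change readBit r k ℓ (x.bits ℓ) E = readBit r k ℓ (y.bits ℓ) E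
    by_cases hℓ : r ℓ < α ∨ r k ≤ r ℓ
    · rw [h ℓ hℓ]
    · obtain ⟨hα, hk⟩ := not_or.1 hℓ
      have hbit : ∀ b c, bit ℓ b ∈ E → bit ℓ c ∈ E := fun b c hb =>
        hE.2 hb (.bit fun hℓα => absurd hℓα hα)
      have hmem : bit ℓ (x.bits ℓ) ∈ E ↔ bit ℓ (y.bits ℓ) ∈ E := ⟨hbit _ _, hbit _ _⟩
      rw [readBit, readBit, if_pos (not_le.1 hk), if_pos (not_le.1 hk),
        Measure.dirac_apply' _ hE.1, Measure.dirac_apply' _ hE.1]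
      exact Set.indicator_eq_indicator hmem rfl
  · rfl

theorem stable_haarSections : (parityLMP r).Stable (haarSections K) := fun E hE _ _ _ a =>
  ⟨measurableSet_lt measurable_const ((parityLMP r).measurable_eval a E hE.1),
    fun k => measurableSet_lt measurable_const (measurable_transition_seq_mk r a k E)⟩

theorem indist_zero_subset_eventBisim [Infinite K] :
    indist r 0 ⊆ (parityLMP r).eventBisim := by
  refine LMP.subset_eventBisim _ isSubSigmaAlgebra_haarSections stable_haarSections indist_symm ?_
  rintro ⟨_, _⟩ (h | h) a E ⟨hE, hEsec⟩
  · exact τ_seq_eq h hE a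
  · exact τ_bit_eq hE.1 (parityMeasure_eq_of_measurableSet_preimage_mk (hEsec.2 _) _ _) a

theorem indist_add_one_subset_Oop (hr : IsLowerSet (Set.range r)) (α : Ordinal) :
    indist r (α + 1) ⊆ (parityLMP r).Oop (indist r α) := by
  rintro ⟨_, _⟩ (h | @⟨k, b, c, h⟩) a E hE
  · exact τ_seq_eq (fun ℓ hℓ => h ℓ (hℓ.imp_left fun hα => hα.trans (lt_add_one α))) hE a
  · rcases lt_or_ge α (r k) with hα | hα
    · obtain ⟨ℓ, rfl⟩ := hr hα.le ⟨k, rfl⟩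
      exact τ_bit_eq hE.1 (parityMeasure_preimage_seq_eq hα hE b c) a
    · rw [h (Order.lt_add_one_iff.2 hα)]

theorem indist_subset_Oiter [Infinite K] (hr : IsLowerSet (Set.range r)) (α : Ordinal) :
    indist r α ⊆ (parityLMP r).Oiter (parityLMP r).eventBisim α := by
  induction α using Ordinal.limitRecOn with
  | zero =>
    rw [LMP.Oiter_zero]
    exact indist_zero_subset_eventBisim
  | add_one α ih =>
    rw [LMP.Oiter_add_one]
    exact (indist_add_one_subset_Oop hr α).trans ((parityLMP r).OopHom.monotone ih)
  | limit α hα ih =>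
    rw [LMP.Oiter_of_isSuccLimit _ _ hα]
    exact Set.subset_iInter₂ fun γ hγ => (indist_anti hγ.le).trans (ih γ hγ)

theorem kind_eq_of_mem_stateBisim {s t : ParityState K}
    (h : (s, t) ∈ (parityLMP r).stateBisim) : kind s = kind t := by
  by_contra hne
  have hst := LMP.τ_eq_of_mem_stateBisim _ h (LMP.univ_mem_sigmaCl _) (.inr (kind s))
  change transition r (.inr (kind s)) s _ = transition r (.inr (kind s)) t _ at hst
  rw [transition, transition, if_pos rfl, if_neg (Ne.symm hne), measure_univ] at hst
  exact one_ne_zero hst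

theorem eq_of_seq_mem_stateBisim {k : K}
    (hbits : ∀ ℓ, r ℓ < r k → ∀ b c, (bit ℓ b, bit ℓ c) ∈ (parityLMP r).stateBisim → b = c)
    {x y : ParityCube K} (hxy : (seq k x, seq k y) ∈ (parityLMP r).stateBisim) : x = y := by
  ext ℓ
  have hread : ∀ E ∈ LMP.sigmaCl (parityLMP r).stateBisim,
      readBit r k ℓ (x.bits ℓ) E = readBit r k ℓ (y.bits ℓ) E := fun E hE =>
    LMP.τ_eq_of_mem_stateBisim _ hxy hE (.inl ℓ)
  by_cases hℓ : r ℓ < r k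
  · have hclosed : {bit ℓ (x.bits ℓ)} ∈ LMP.sigmaCl (parityLMP r).stateBisim := by
      refine ⟨measurableSet_singleton _, ?_⟩
      rintro _ rfl ⟨ℓ', w⟩ h
      obtain ⟨rfl, hw⟩ := Prod.mk.inj (kind_eq_of_mem_stateBisim h)
      rcases w with z | c
      · cases hw
      · rw [hbits _ hℓ _ _ h]
        rfl
    have hx := hread _ hclosed
    rw [readBit, readBit, if_pos hℓ, if_pos hℓ, Measure.dirac_apply_of_mem (Set.mem_singleton _),
      Measure.dirac_apply' _ hclosed.1] at hx
    have hmem : bit ℓ (y.bits ℓ) ∈ {bit ℓ (x.bits ℓ)} :=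
      Set.mem_of_indicator_ne_zero (hx ▸ one_ne_zero)
    exact (Sum.inr_injective (Prod.mk.inj hmem).2).symm
  · have hzero : x.bits ℓ = 0 ↔ y.bits ℓ = 0 := by
      rw [← readBit_univ_eq_zero_iff hℓ, ← readBit_univ_eq_zero_iff hℓ,
        hread _ (LMP.univ_mem_sigmaCl _)]
    exact (by decide : ∀ b c : ZMod 2, (b = 0 ↔ c = 0) → b = c) _ _ hzero

theorem eq_of_bit_mem_stateBisim_of_seq [Nonempty K] {k : K}
    (hseq : ∀ x y, (seq k x, seq k y) ∈ (parityLMP r).stateBisim → x = y) {b c : ZMod 2}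
    (hbc : (bit k b, bit k c) ∈ (parityLMP r).stateBisim) : b = c := by
  by_contra hne
  let E : Set (ParityState K) := seq k '' {x | parity K x.bits = b}
  have hpre : seq k ⁻¹' E = {x | parity K x.bits = b} :=
    Set.preimage_image_eq _ ((Prod.mk_right_injective k).comp Sum.inl_injective)
  have hclosed : E ∈ LMP.sigmaCl (parityLMP r).stateBisim := by
    constructor
    · exact (measurableEmbedding_seq k).measurableSet_image.2
        (measurableSet_eq_fun measurable_parity measurable_const)
    · rintro _ ⟨x, hx, rfl⟩ ⟨k', w⟩ h
      obtain ⟨rfl, hw⟩ := Prod.mk.inj (kind_eq_of_mem_stateBisim h)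
      rcases w with y | c
      · exact ⟨y, hseq x y h ▸ hx, rfl⟩
      · cases hw
  have hmeasure : parityMeasure b (seq k ⁻¹' E) = parityMeasure c (seq k ⁻¹' E) := by
    rw [← Measure.map_apply (measurable_seq k) hclosed.1,
      ← Measure.map_apply (measurable_seq k) hclosed.1]
    exact LMP.τ_eq_of_mem_stateBisim _ hbc hclosed (.inl k)
  rw [hpre, parityMeasure_parity_eq_zero_iff.2 (Ne.symm hne)] at hmeasure
  exact parityMeasure_parity_eq_zero_iff.1 hmeasure rfl

theorem eq_of_bit_mem_stateBisim {k : K} {b c : ZMod 2}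
    (h : (bit k b, bit k c) ∈ (parityLMP r).stateBisim) : b = c := by
  have : Nonempty K := ⟨k⟩
  induction hα : r k using WellFoundedLT.induction generalizing k b c with
  | ind α ih =>
    subst hα
    exact eq_of_bit_mem_stateBisim_of_seq
      (fun x y => eq_of_seq_mem_stateBisim fun ℓ hℓ b c hbc => ih (r ℓ) hℓ hbc rfl) h

theorem Oiter_ne_stateBisim [Infinite K] (hr : IsLowerSet (Set.range r)) (k : K) :
    (parityLMP r).Oiter (parityLMP r).eventBisim (r k) ≠ (parityLMP r).stateBisim := by
  intro heq
  have h01 : (bit k 0, bit k 1) ∈ indist r (r k) := Indist.bit fun hk => absurd hk (lt_irrefl _)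
  exact zero_ne_one (eq_of_bit_mem_stateBisim (heq ▸ indist_subset_Oiter hr _ h01))

theorem le_of_isZhou [Infinite K] {γ ζ : Ordinal} (hr : Set.range r = Set.Iio γ)
    (hζ : (parityLMP r).IsZhou ζ) : γ ≤ ζ := by
  by_contra! hlt
  obtain ⟨k, rfl⟩ : ζ ∈ Set.range r := hr ▸ hlt
  exact Oiter_ne_stateBisim (hr ▸ isLowerSet_Iio γ) k hζ.1

end Measurable

theorem separableMeasurableSpace [Countable K] [MeasurableSpace K] [MeasurableSingletonClass K] :
    SeparableMeasurableSpace (ParityState K) :=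
  separableMeasurableSpace_iff.2 ⟨inferInstance, inferInstance⟩

end ParityState

theorem exists_separable_isZhou_ge (β : Ordinal.{0}) (hβ : β.card ≤ Cardinal.aleph0) :
    ∃ P : PackedLMP, P.Separable ∧ ∃ ζ : Ordinal.{0}, P.IsZhou ζ ∧ β ≤ ζ := by
  let γ := max β Ordinal.omega0
  have hγ : γ.card = Cardinal.aleph0 := by
    refine le_antisymm ?_ (Ordinal.card_omega0.ge.trans (Ordinal.card_le_card (le_max_right _ _)))
    exact max_rec' (fun δ : Ordinal => δ.card ≤ Cardinal.aleph0) hβ Ordinal.card_omega0.le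
  let K := γ.ToType
  let r : K → Ordinal := fun k => (Ordinal.ToType.mk.symm k).1
  have hr : Set.range r = Set.Iio γ :=
    (Ordinal.ToType.mk.symm.surjective.range_comp Subtype.val).trans Subtype.range_coe
  have hK : Cardinal.mk K = Cardinal.aleph0 := (Cardinal.mk_toType γ).trans hγ
  have : Countable K := Cardinal.mk_le_aleph0_iff.1 hK.le
  have : Infinite K := Cardinal.aleph0_le_mk_iff.1 hK.ge
  let _ : MeasurableSpace K := ⊤
  obtain ⟨ζ, hζ⟩ := (ParityState.parityLMP r).exists_isZhou
  exact ⟨⟨ParityState K, inferInstance, K ⊕ K × Bool, inferInstance, ParityState.parityLMP r⟩,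
    ParityState.separableMeasurableSpace, ζ, hζ,
    (le_max_left _ _).trans (ParityState.le_of_isZhou hr hζ)⟩

/-- For every countable ordinal `β` there is a separable LMP whose Zhou ordinal is at least
`β`; that is, the supremum of the Zhou ordinals of separable LMPs is at least `ω₁`. -/
theorem exists_sepLMP_zhou_ge_of_countable
    (β : Ordinal.{0}) (hβ : β.card ≤ Cardinal.aleph0) :
    (∃ P : PackedLMP, P.Separable ∧ ∃ ζ : Ordinal.{0}, P.IsZhou ζ ∧ β ≤ ζ) ∧
    (Cardinal.aleph 1).ord ≤ sSup zhouOrdinals := by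
  have hle : ∀ α : Ordinal.{0}, α.card ≤ Cardinal.aleph0 → α ≤ sSup zhouOrdinals := by
    intro α hα
    obtain ⟨P, hP, ζ, hζ, hαζ⟩ := exists_separable_isZhou_ge α hα
    exact hαζ.trans (le_csSup bddAbove_zhouOrdinals ⟨P, hP, hζ⟩)
  refine ⟨exists_separable_isZhou_ge β hβ, le_of_forall_lt fun α hα => ?_⟩
  have hα_countable : (α + 1).card ≤ Cardinal.aleph0 := by
    rw [← Order.lt_succ_iff, Cardinal.succ_aleph0, ← Cardinal.lt_ord]
    exact (Cardinal.isSuccLimit_ord (Cardinal.aleph0_le_aleph 1)).add_one_lt hα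
  exact (lt_add_one α).trans_le (hle _ hα_countable)
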